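/- Let k be a positive integer with 4 ∣ k+2, set k̄ = k+2, and write k̄ = 2^{2r+ε}·p with p odd, ε ∈ {0,1}, and r ≥ 1. Then the number of quadruples (v,z,n,m) of integers with 1 ≤ v ≤ k̄, k̄ ∣ v², k̄/v an odd integer, 1 ≤ z ≤ 2v²/k̄, (4v²/k̄) ∣ (z²−1), and n, m ∈ {0,1}, equals 8·d(p), where d(m) denotes the number of positive divisors of m. -/

import Mathlib

/-!
Put `K = k + 2`. The conditions on `v` say that `g = K / v` is odd and `N = v² / K = K / g²` is an
integer. Those on `z` force `z = 2w + 1` with `w < N` and `N ∣ w (w + 1)`; since `w` and `w + 1` are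
coprime, `w ↦ (gcd N w, gcd N (w + 1))` identifies these `w` with the coprime factorizations
`N = a b`. Now `(g a, g b)` is a factorization of `K` with greatest common divisor `g` and least
common multiple `v`, so the pairs `(v, z)` correspond to the factorizations `K = d e` with
`gcd d e` odd. When `K` is even, exactly one of `d` and `e` is then odd; it divides the odd part
`p` of `K`, so there are `2 d(p)` such factorizations. The free bits `n`, `m` contribute a factor
`4`.
-/

open Finset

/-- The factorizations of `n` into an ordered pair of coprime factors; their first components are
the unitary divisors of `n`. -/
def coprimeDivisorsAntidiagonal (n : ℕ) : Finset (ℕ × ℕ) :=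
  {x ∈ n.divisorsAntidiagonal | x.1.Coprime x.2}

lemma mem_coprimeDivisorsAntidiagonal {n : ℕ} {x : ℕ × ℕ} :
    x ∈ coprimeDivisorsAntidiagonal n ↔ (x.1 * x.2 = n ∧ n ≠ 0) ∧ x.1.Coprime x.2 := by
  rw [coprimeDivisorsAntidiagonal, mem_filter, Nat.mem_divisorsAntidiagonal]

lemma coprime_of_dvd_of_dvd_add_one {a b w : ℕ} (ha : a ∣ w) (hb : b ∣ w + 1) : a.Coprime b :=
  Nat.Coprime.of_dvd ha hb (Nat.coprime_self_add_right.2 (Nat.coprime_one_right w))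

lemma gcd_mul_gcd_add_one {n w : ℕ} (h : n ∣ w * (w + 1)) :
    n.gcd w * n.gcd (w + 1) = n := by
  have hw : w.Coprime (w + 1) := coprime_of_dvd_of_dvd_add_one dvd_rfl dvd_rfl
  rw [← hw.gcd_mul, Nat.gcd_eq_left h]

lemma eq_of_gcd_eq_of_gcd_add_one_eq {n w w' : ℕ} (hw : w < n) (hw' : w' < n)
    (h : n ∣ w * (w + 1)) (hgcd : n.gcd w = n.gcd w')
    (hgcd_add_one : n.gcd (w + 1) = n.gcd (w' + 1)) : w = w' := by
  have hcop : (n.gcd w).Coprime (n.gcd (w + 1)) :=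
    coprime_of_dvd_of_dvd_add_one (Nat.gcd_dvd_right _ _) (Nat.gcd_dvd_right _ _)
  have hmod : w ≡ w' [MOD n.gcd w] :=
    (Nat.modEq_zero_iff_dvd.2 (Nat.gcd_dvd_right _ _)).trans
      (Nat.modEq_zero_iff_dvd.2 (hgcd ▸ Nat.gcd_dvd_right _ _)).symm
  have hmod_add_one : w + 1 ≡ w' + 1 [MOD n.gcd (w + 1)] :=
    (Nat.modEq_zero_iff_dvd.2 (Nat.gcd_dvd_right _ _)).trans
      (Nat.modEq_zero_iff_dvd.2 (hgcd_add_one ▸ Nat.gcd_dvd_right _ _)).symm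
  have hmod_mul := (Nat.modEq_and_modEq_iff_modEq_mul hcop).1
    ⟨hmod, Nat.ModEq.add_right_cancel' 1 hmod_add_one⟩
  rw [gcd_mul_gcd_add_one h] at hmod_mul
  exact hmod_mul.eq_of_lt_of_lt hw hw'

lemma exists_lt_mul_dvd_and_dvd_add_one {a b : ℕ} (ha : a ≠ 0) (hb : b ≠ 0) (h : a.Coprime b) :
    ∃ w < a * b, a ∣ w ∧ b ∣ w + 1 := by
  let w := Nat.chineseRemainder h 0 (b - 1)
  have hwb : (w : ℕ) + 1 ≡ 0 [MOD b] := by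
    have hmod := w.2.2.add_right 1
    rw [Nat.sub_add_cancel (Nat.pos_of_ne_zero hb)] at hmod
    exact hmod.trans (Nat.modEq_zero_iff_dvd.2 dvd_rfl)
  exact ⟨w, Nat.chineseRemainder_lt_mul h 0 (b - 1) ha hb, Nat.modEq_zero_iff_dvd.1 w.2.1,
    Nat.modEq_zero_iff_dvd.1 hwb⟩

lemma card_filter_dvd_mul_add_one (n : ℕ) :
    #{w ∈ range n | n ∣ w * (w + 1)} = #(coprimeDivisorsAntidiagonal n) := by
  refine card_bij (fun w _ ↦ (n.gcd w, n.gcd (w + 1))) ?maps_to ?inj ?surj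
  case maps_to =>
    intro w hw
    obtain ⟨hwn, hdvd⟩ := mem_filter.1 hw
    exact mem_coprimeDivisorsAntidiagonal.2
      ⟨⟨gcd_mul_gcd_add_one hdvd, Nat.ne_zero_of_lt (mem_range.1 hwn)⟩,
        coprime_of_dvd_of_dvd_add_one (Nat.gcd_dvd_right _ _) (Nat.gcd_dvd_right _ _)⟩
  case inj =>
    intro w hw w' hw' heq
    rw [mem_filter, mem_range] at hw hw'
    rw [Prod.mk.injEq] at heq
    exact eq_of_gcd_eq_of_gcd_add_one_eq hw.1 hw'.1 hw.2 heq.1 heq.2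
  case surj =>
    rintro ⟨a, b⟩ hab
    obtain ⟨⟨rfl, hne⟩, hcop⟩ := mem_coprimeDivisorsAntidiagonal.1 hab
    obtain ⟨ha, hb⟩ := mul_ne_zero_iff.1 hne
    obtain ⟨w, hlt, haw, hbw⟩ := exists_lt_mul_dvd_and_dvd_add_one ha hb hcop
    have hcop_b : b.Coprime w := (coprime_of_dvd_of_dvd_add_one dvd_rfl hbw).symm
    have hcop_a : a.Coprime (w + 1) := coprime_of_dvd_of_dvd_add_one haw dvd_rfl
    refine ⟨w, mem_filter.2 ⟨mem_range.2 hlt, mul_dvd_mul haw hbw⟩, Prod.ext ?_ ?_⟩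
    · exact (hcop_b.gcd_mul_right_cancel a).trans (Nat.gcd_eq_left haw)
    · exact (hcop_a.gcd_mul_left_cancel b).trans (Nat.gcd_eq_left hbw)

/-- The square roots of `1` modulo `4 * n`, taken up to translation by `2 * n` (which permutes
them): this is the range of the label `z` when `v ^ 2 = (k + 2) * n`. -/
def sqrtsOne (n : ℕ) : Finset ℕ :=
  {z ∈ Icc 1 (2 * n) | 4 * n ∣ z ^ 2 - 1}

lemma two_mul_add_one_sq_sub_one (w : ℕ) : (2 * w + 1) ^ 2 - 1 = 4 * (w * (w + 1)) :=
  Nat.sub_eq_of_eq_add (by ring)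

lemma odd_of_four_dvd_sq_sub_one {z : ℕ} (hz : z ≠ 0) (h : 4 ∣ z ^ 2 - 1) : Odd z := by
  have hsq : 1 ≤ z ^ 2 := Nat.one_le_pow _ _ (Nat.pos_of_ne_zero hz)
  have hodd : Odd (z ^ 2) := Nat.odd_iff.2 (by omega)
  exact (Nat.odd_pow_iff two_ne_zero).1 hodd

lemma sqrtsOne_eq_image (n : ℕ) :
    sqrtsOne n = {w ∈ range n | n ∣ w * (w + 1)}.image (2 * · + 1) := by
  ext z
  simp only [sqrtsOne, mem_filter, mem_Icc, mem_image, mem_range]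
  constructor
  · rintro ⟨⟨hz, hzn⟩, hdvd⟩
    obtain ⟨w, rfl⟩ := odd_of_four_dvd_sq_sub_one (by omega) (dvd_of_mul_right_dvd hdvd)
    rw [two_mul_add_one_sq_sub_one] at hdvd
    exact ⟨w, ⟨by omega, Nat.dvd_of_mul_dvd_mul_left four_pos hdvd⟩, rfl⟩
  · rintro ⟨w, ⟨hwn, hdvd⟩, rfl⟩
    rw [two_mul_add_one_sq_sub_one]
    exact ⟨⟨by omega, by omega⟩, mul_dvd_mul_left 4 hdvd⟩

lemma card_sqrtsOne (n : ℕ) : #(sqrtsOne n) = #(coprimeDivisorsAntidiagonal n) := by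
  have hinj : Function.Injective fun w : ℕ ↦ 2 * w + 1 := fun w w' h ↦ by simpa using h
  rw [sqrtsOne_eq_image, card_image_of_injective _ hinj, card_filter_dvd_mul_add_one]

lemma filter_gcd_eq_divisorsAntidiagonal {g : ℕ} (hg : g ≠ 0) (n : ℕ) :
    {x ∈ (g ^ 2 * n).divisorsAntidiagonal | x.1.gcd x.2 = g} =
      (coprimeDivisorsAntidiagonal n).image fun x ↦ (g * x.1, g * x.2) := by
  ext ⟨d, e⟩
  simp only [mem_filter, Nat.mem_divisorsAntidiagonal, mem_image,
    mem_coprimeDivisorsAntidiagonal, Prod.mk.injEq, Prod.exists]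
  constructor
  · rintro ⟨⟨hde, hne⟩, hgcd⟩
    obtain ⟨a, rfl⟩ : g ∣ d := hgcd ▸ Nat.gcd_dvd_left d e
    obtain ⟨b, rfl⟩ : g ∣ e := hgcd ▸ Nat.gcd_dvd_right _ e
    have hab : a * b = n := mul_left_cancel₀ (pow_ne_zero 2 hg) (by rw [← hde]; ring)
    have hcop : a.Coprime b := by
      rwa [Nat.gcd_mul_left, Nat.mul_eq_left hg] at hgcd
    exact ⟨a, b, ⟨⟨hab, right_ne_zero_of_mul hne⟩, hcop⟩, rfl, rfl⟩
  · rintro ⟨a, b, ⟨⟨rfl, hne⟩, hcop⟩, rfl, rfl⟩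
    refine ⟨⟨by ring, mul_ne_zero (pow_ne_zero 2 hg) hne⟩, ?_⟩
    rw [Nat.gcd_mul_left, hcop.gcd_eq_one, mul_one]

lemma card_filter_gcd_eq_divisorsAntidiagonal {g : ℕ} (hg : g ≠ 0) (n : ℕ) :
    #{x ∈ (g ^ 2 * n).divisorsAntidiagonal | x.1.gcd x.2 = g} =
      #(coprimeDivisorsAntidiagonal n) := by
  have hinj : Function.Injective fun x : ℕ × ℕ ↦ (g * x.1, g * x.2) := fun x y h ↦ by
    simpa [Prod.ext_iff, hg] using h
  rw [filter_gcd_eq_divisorsAntidiagonal hg, card_image_of_injective _ hinj]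

lemma card_filter_lcm_eq_divisorsAntidiagonal {K v : ℕ} (hK : K ≠ 0) (hv : v ∣ K)
    (hKv : K ∣ v ^ 2) :
    #{x ∈ K.divisorsAntidiagonal | x.1.lcm x.2 = v} =
      #(coprimeDivisorsAntidiagonal (v ^ 2 / K)) := by
  obtain ⟨g, rfl⟩ := hv
  obtain ⟨hv0, hg⟩ := mul_ne_zero_iff.1 hK
  obtain ⟨n, rfl⟩ : g ∣ v := Nat.dvd_of_mul_dvd_mul_left (Nat.pos_of_ne_zero hv0) (sq v ▸ hKv)
  have hK_eq : g * n * g = g ^ 2 * n := by ring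
  have hquot : (g * n) ^ 2 / (g ^ 2 * n) = n := by
    rw [show (g * n) ^ 2 = g ^ 2 * n * n by ring,
      Nat.mul_div_cancel_left n (Nat.pos_of_ne_zero (hK_eq ▸ hK))]
  rw [hK_eq, hquot, ← card_filter_gcd_eq_divisorsAntidiagonal hg]
  refine congrArg card (filter_congr fun x hx ↦ ?_)
  have hgcd_mul_lcm : x.1.gcd x.2 * x.1.lcm x.2 = g * (g * n) := by
    rw [Nat.gcd_mul_lcm, (Nat.mem_divisorsAntidiagonal.1 hx).1]
    ring
  constructor
  · intro hlcm
    rw [hlcm] at hgcd_mul_lcm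
    exact mul_right_cancel₀ hv0 hgcd_mul_lcm
  · intro hgcd
    rw [hgcd] at hgcd_mul_lcm
    exact mul_left_cancel₀ hg hgcd_mul_lcm

lemma card_filter_gcd_divisorsAntidiagonal (K : ℕ) (P : ℕ → Prop) [DecidablePred P] :
    #{x ∈ K.divisorsAntidiagonal | P (x.1.gcd x.2)} =
      ∑ v ∈ K.divisors with K ∣ v ^ 2 ∧ P (K / v), #(coprimeDivisorsAntidiagonal (v ^ 2 / K)) := by
  have div_lcm : ∀ x ∈ K.divisorsAntidiagonal, K / x.1.lcm x.2 = x.1.gcd x.2 := by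
    intro x hx
    obtain ⟨hmul, hK⟩ := Nat.mem_divisorsAntidiagonal.1 hx
    obtain ⟨hfst, hsnd⟩ := mul_ne_zero_iff.1 (hmul ▸ hK)
    exact Nat.div_eq_of_eq_mul_left (Nat.pos_of_ne_zero (Nat.lcm_ne_zero hfst hsnd))
      (hmul ▸ (Nat.gcd_mul_lcm _ _).symm)
  rw [card_eq_sum_card_fiberwise (f := fun x ↦ x.1.lcm x.2)
    (t := {v ∈ K.divisors | K ∣ v ^ 2 ∧ P (K / v)})]
  · refine sum_congr rfl fun v hv ↦ ?_
    rw [mem_filter, Nat.mem_divisors] at hv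
    obtain ⟨⟨hvK, hK⟩, hKv, hP⟩ := hv
    rw [filter_filter, ← card_filter_lcm_eq_divisorsAntidiagonal hK hvK hKv]
    refine congrArg card (filter_congr fun x hx ↦ and_iff_right_of_imp ?_)
    rintro rfl
    exact div_lcm x hx ▸ hP
  · intro x hx
    obtain ⟨hx, hP⟩ := mem_filter.1 (mem_coe.1 hx)
    obtain ⟨hmul, hK⟩ := Nat.mem_divisorsAntidiagonal.1 hx
    refine mem_coe.2 (mem_filter.2 ⟨Nat.mem_divisors.2 ⟨?_, hK⟩, ?_, (div_lcm x hx).symm ▸ hP⟩)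
    · exact hmul ▸ Nat.lcm_dvd_mul _ _
    · rw [← hmul, ← Nat.gcd_mul_lcm, sq]
      exact mul_dvd_mul_right (Nat.gcd_dvd_left _ _ |>.trans (Nat.dvd_lcm_left _ _)) _

lemma divisors_filter_not_dvd {q m : ℕ} (hq : q.Prime) (hm : ¬q ∣ m) (a : ℕ) :
    {d ∈ (q ^ a * m).divisors | ¬q ∣ d} = m.divisors := by
  have hm0 : m ≠ 0 := fun h ↦ hm (h ▸ dvd_zero q)
  ext d
  rw [mem_filter, Nat.mem_divisors, Nat.mem_divisors]
  constructor
  · rintro ⟨⟨hd, -⟩, hqd⟩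
    have hcop : d.Coprime (q ^ a) := ((hq.coprime_iff_not_dvd.2 hqd).pow_left a).symm
    exact ⟨hcop.dvd_of_dvd_mul_left hd, hm0⟩
  · rintro ⟨hd, -⟩
    exact ⟨⟨hd.mul_left _, mul_ne_zero (pow_ne_zero a hq.ne_zero) hm0⟩, fun h ↦ hm (h.trans hd)⟩

lemma card_filter_fst_divisorsAntidiagonal (n : ℕ) (P : ℕ → Prop) [DecidablePred P] :
    #{x ∈ n.divisorsAntidiagonal | P x.1} = #{d ∈ n.divisors | P d} := by
  rw [← Nat.map_div_right_divisors, filter_map, card_map]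
  rfl

lemma card_filter_snd_divisorsAntidiagonal (n : ℕ) (P : ℕ → Prop) [DecidablePred P] :
    #{x ∈ n.divisorsAntidiagonal | P x.2} = #{d ∈ n.divisors | P d} := by
  rw [← Nat.map_div_left_divisors, filter_map, card_map]
  rfl

lemma card_filter_not_dvd_gcd {q m a : ℕ} (hq : q.Prime) (hm : ¬q ∣ m) (ha : a ≠ 0) :
    #{x ∈ (q ^ a * m).divisorsAntidiagonal | ¬q ∣ x.1.gcd x.2} = 2 * #m.divisors := by
  have hdisj : Disjoint {x ∈ (q ^ a * m).divisorsAntidiagonal | ¬q ∣ x.1}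
      {x ∈ (q ^ a * m).divisorsAntidiagonal | ¬q ∣ x.2} := by
    refine disjoint_filter.2 fun x hx hfst hsnd ↦ hq.not_dvd_mul hfst hsnd ?_
    rw [(Nat.mem_divisorsAntidiagonal.1 hx).1]
    exact (dvd_pow_self q ha).mul_right m
  simp only [Nat.dvd_gcd_iff, not_and_or]
  rw [filter_or, card_union_of_disjoint hdisj,
    card_filter_fst_divisorsAntidiagonal _ (¬q ∣ ·),
    card_filter_snd_divisorsAntidiagonal _ (¬q ∣ ·),
    divisors_filter_not_dvd hq hm, two_mul]

/-- The labels `(v, z, n, m)` of the invariants `M^{2,2}[v,z,n,m]` at level `K - 2`. -/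
def invariantLabels (K : ℕ) : Finset (ℕ × ℕ × ℕ × ℕ) :=
  {v ∈ K.divisors | K ∣ v ^ 2 ∧ Odd (K / v)}.biUnion fun v ↦
    {v} ×ˢ sqrtsOne (v ^ 2 / K) ×ˢ Iic 1 ×ˢ Iic 1

lemma mem_invariantLabels {K : ℕ} (hK : K ≠ 0) (t : ℕ × ℕ × ℕ × ℕ) :
    t ∈ invariantLabels K ↔
      1 ≤ t.1 ∧ t.1 ≤ K ∧ K ∣ t.1 ^ 2 ∧ t.1 ∣ K ∧ Odd (K / t.1) ∧
        1 ≤ t.2.1 ∧ t.2.1 ≤ 2 * t.1 ^ 2 / K ∧ 4 * t.1 ^ 2 / K ∣ t.2.1 ^ 2 - 1 ∧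
        t.2.2.1 ≤ 1 ∧ t.2.2.2 ≤ 1 := by
  obtain ⟨v, z, n, m⟩ := t
  have hbounds : v ∣ K → 1 ≤ v ∧ v ≤ K := fun hv ↦
    ⟨Nat.pos_of_dvd_of_pos hv (Nat.pos_of_ne_zero hK), Nat.le_of_dvd (Nat.pos_of_ne_zero hK) hv⟩
  have hmul_div : K ∣ v ^ 2 → ∀ s, s * v ^ 2 / K = s * (v ^ 2 / K) := fun h s ↦
    Nat.mul_div_assoc s h
  simp only [invariantLabels, sqrtsOne, mem_biUnion, mem_product, mem_singleton, mem_filter,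
    Nat.mem_divisors, mem_Icc, mem_Iic]
  constructor
  · rintro ⟨_, ⟨⟨hv, -⟩, hKv, hodd⟩, rfl, ⟨⟨hz, hz_le⟩, hdvd⟩, hn, hm⟩
    rw [hmul_div hKv, hmul_div hKv]
    exact ⟨(hbounds hv).1, (hbounds hv).2, hKv, hv, hodd, hz, hz_le, hdvd, hn, hm⟩
  · rintro ⟨-, -, hKv, hv, hodd, hz, hz_le, hdvd, hn, hm⟩
    rw [hmul_div hKv] at hz_le hdvd
    exact ⟨v, ⟨⟨hv, hK⟩, hKv, hodd⟩, rfl, ⟨⟨hz, hz_le⟩, hdvd⟩, hn, hm⟩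

lemma card_invariantLabels (K : ℕ) :
    #(invariantLabels K) = #{x ∈ K.divisorsAntidiagonal | Odd (x.1.gcd x.2)} * 4 := by
  rw [invariantLabels, card_biUnion, card_filter_gcd_divisorsAntidiagonal K Odd, sum_mul]
  · simp only [card_product, card_singleton, card_sqrtsOne, Nat.card_Iic, one_mul]
  · intro v _ v' _ hne
    exact disjoint_product.2 (Or.inl (disjoint_singleton.2 hne))

theorem count_M22_general {K p a : ℕ} (hp : Odd p) (ha : a ≠ 0) (hK : K = 2 ^ a * p) :
    Nat.card {t : ℕ × ℕ × ℕ × ℕ //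
        1 ≤ t.1 ∧ t.1 ≤ K ∧ K ∣ t.1 ^ 2 ∧
        t.1 ∣ K ∧ Odd (K / t.1) ∧
        1 ≤ t.2.1 ∧ t.2.1 ≤ 2 * t.1 ^ 2 / K ∧
        (4 * t.1 ^ 2 / K) ∣ (t.2.1 ^ 2 - 1) ∧
        t.2.2.1 ≤ 1 ∧ t.2.2.2 ≤ 1}
      = 8 * p.divisors.card := by
  have hK0 : K ≠ 0 := hK ▸ mul_ne_zero (pow_ne_zero a two_ne_zero) hp.pos.ne'
  have hcard : #{x ∈ K.divisorsAntidiagonal | Odd (x.1.gcd x.2)} = 2 * #p.divisors := by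
    simp only [hK, ← Nat.not_even_iff_odd, even_iff_two_dvd]
    exact card_filter_not_dvd_gcd Nat.prime_two hp.not_two_dvd_nat ha
  rw [Nat.subtype_card _ (mem_invariantLabels hK0), card_invariantLabels, hcard]
  ring

/-- for `4 ∣ k+2` with `k̄ = 2^{2r+ε}·p` (`p` odd, `ε ∈ {0,1}`, `r ≥ 1`),
the number of quadruples `(v,z,n,m)` parametrising the physical invariants
`M^{2,2}[v,z,n,m]` equals `8·d(p)`. -/
theorem count_M22 (k p r ε : ℕ) (hk : 4 ∣ k + 2) (hk0 : 0 < k)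
    (hp : Odd p) (hr : 1 ≤ r) (hε : ε ≤ 1) (hdec : k + 2 = 2 ^ (2 * r + ε) * p) :
    Nat.card {t : ℕ × ℕ × ℕ × ℕ //
        1 ≤ t.1 ∧ t.1 ≤ k + 2 ∧ (k + 2) ∣ t.1 ^ 2 ∧
        t.1 ∣ (k + 2) ∧ Odd ((k + 2) / t.1) ∧
        1 ≤ t.2.1 ∧ t.2.1 ≤ 2 * t.1 ^ 2 / (k + 2) ∧
        (4 * t.1 ^ 2 / (k + 2)) ∣ (t.2.1 ^ 2 - 1) ∧
        t.2.2.1 ≤ 1 ∧ t.2.2.2 ≤ 1}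
      = 8 * p.divisors.card := by
  exact count_M22_general hp (by omega) hdec
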